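/- Let f : V → ℂ, let v ∈ V_+ (so v has q_+ + 1 neighbors), and let n ≥ 1. Then M_1(M_n f)(v) = (1/(q_-+1))·M_{n−1} f(v) + (q_- /(q_-+1))·M_{n+1} f(v). -/

import Mathlib

open scoped BigOperators ComplexOrder

/-- A semi-homogeneous tree `T_{q_+,q_-}`: a connected acyclic simple graph with a
parity function `eps` (true = `+`, false = `−`) that flips across edges, in which every
vertex of parity `+` has exactly `qp + 1` neighbors and every vertex of parity `−` has
exactly `qm + 1` neighbors.  Spheres are finite (this follows from local finiteness
and connectedness, and is recorded as a field for convenience). -/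
structure SemiHomTree (qp qm : ℕ) (V : Type) where
  G : SimpleGraph V
  connected : G.Connected
  acyclic : G.IsAcyclic
  eps : V → Bool
  adj_parity : ∀ ⦃v w : V⦄, G.Adj v w → eps w = !eps v
  nbr_finite : ∀ v : V, {w : V | G.Adj v w}.Finite
  degree_plus : ∀ v : V, eps v = true → {w : V | G.Adj v w}.ncard = qp + 1
  degree_minus : ∀ v : V, eps v = false → {w : V | G.Adj v w}.ncard = qm + 1
  sphere_finite : ∀ (v : V) (n : ℕ), {w : V | G.dist v w = n}.Finite

/-- The averaging operator `M_n`: average of `f` over the sphere of radius `n` around `v`. -/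
noncomputable def Mop {qp qm : ℕ} {V : Type} (T : SemiHomTree qp qm V)
    (n : ℕ) (f : V → ℂ) (v : V) : ℂ :=
  (({w : V | T.G.dist v w = n}.ncard : ℂ))⁻¹ * ∑ᶠ w ∈ {w : V | T.G.dist v w = n}, f w

/-- The Laplace operator `μ₁`: the average of `f` over the neighbors of `v`. -/
noncomputable def lap {qp qm : ℕ} {V : Type} (T : SemiHomTree qp qm V)
    (f : V → ℂ) (v : V) : ℂ :=
  (((if T.eps v then qp else qm : ℕ) : ℂ) + 1)⁻¹ * ∑ᶠ w ∈ {w : V | T.G.Adj v w}, f w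

/-!
For a neighbour `w` of `v`, the sphere of radius `n + 1` about `w` only meets the spheres of radii
`n` and `n + 2` about `v`. Summing over `w`, a point `u` at distance `n + 2` from `v` is counted
once, through the neighbour of `v` towards `u`, while a point at distance `n` is counted once for
each neighbour of `v` that leads away from `u`, say `c` times. Hence the sum of `f` over all these
spheres is `c ∑_{S(v, n)} f + ∑_{S(v, n + 2)} f`. By homogeneity all spheres of radius `n + 1` about
neighbours of `v` have the same size, which the same identity with `f = 1` computes from
`|S(v, n + 2)| = q c |S(v, n)|`, where `q + 1` is the degree of the neighbours of `v`; dividing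
yields the weights `1 / (q + 1)` and `q / (q + 1)`.
-/

open Finset

section Tree

variable {V : Type*} {G : SimpleGraph V}

theorem existsUnique_adj_dist_eq_of_isTree (hG : G.IsTree) {u v : V} {n : ℕ}
    (h : G.dist u v = n + 1) : ∃! w, G.Adj v w ∧ G.dist u w = n := by
  rw [G.dist_comm] at h
  simp only [G.dist_comm (u := u)]
  have extend {w : V} (hvw : G.Adj v w) (hw : G.dist w u = n) :
      ∃ p : G.Walk w u, (SimpleGraph.Walk.cons hvw p).IsPath := by
    obtain ⟨p, hp⟩ := hG.connected.exists_walk_length_eq_dist w u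
    exact ⟨p, SimpleGraph.Walk.isPath_of_length_eq_dist _ (by simp [hp, hw, h])⟩
  obtain ⟨p, hp⟩ := hG.connected.exists_walk_length_eq_dist v u
  cases p with
  | nil => simp at h
  | @cons _ w _ hvw p =>
    have hw : G.dist w u = n := by
      have hle := G.dist_le p
      have hstep := hG.dist_eq_dist_add_one_of_adj u hvw
      simp only [SimpleGraph.Walk.length_cons, G.dist_comm (u := u)] at hp hstep
      omega
    refine ⟨w, ⟨hvw, hw⟩, fun w' ⟨hvw', hw'⟩ => ?_⟩
    obtain ⟨q, hq⟩ := extend hvw hw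
    obtain ⟨q', hq'⟩ := extend hvw' hw'
    have hpaths := (hG.existsUnique_path v u).unique hq' hq
    simp only [SimpleGraph.Walk.cons.injEq] at hpaths
    exact hpaths.1

variable (hfin : ∀ (v : V) (n : ℕ), {w : V | G.dist v w = n}.Finite)

/-- The sphere of radius `n` about `v` for the graph distance, as a `Finset`, in a graph all of
whose spheres are finite. -/
noncomputable def distSphere (v : V) (n : ℕ) : Finset V := (hfin v n).toFinset

/-- The number of neighbours of `v` that are one step farther from `u` than `v` is. -/
noncomputable def outDegree (u v : V) : ℕ :=
  #{w ∈ distSphere hfin v 1 | G.dist u w = G.dist u v + 1}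

variable {hfin}

theorem mem_distSphere {v w : V} {n : ℕ} : w ∈ distSphere hfin v n ↔ G.dist v w = n := by
  simp [distSphere]

theorem mem_distSphere_one {v w : V} : w ∈ distSphere hfin v 1 ↔ G.Adj v w := by
  rw [mem_distSphere, SimpleGraph.dist_eq_one_iff_adj]

theorem distSphere_zero (hG : G.Connected) (v : V) : distSphere hfin v 0 = {v} := by
  ext w
  rw [mem_distSphere, hG.dist_eq_zero_iff, mem_singleton, eq_comm]

theorem card_filter_dist_eq_one_of_isTree (hG : G.IsTree) {u v : V} {n : ℕ}
    (h : G.dist u v = n + 1) : #{w ∈ distSphere hfin v 1 | G.dist u w = n} = 1 := by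
  simpa only [card_eq_one_iff_existsUnique, mem_filter, mem_distSphere_one]
    using existsUnique_adj_dist_eq_of_isTree hG h

theorem outDegree_self (v : V) : outDegree hfin v v = #(distSphere hfin v 1) := by
  rw [outDegree, filter_true_of_mem]
  intro w hw
  rw [mem_distSphere.1 hw, SimpleGraph.dist_self]

theorem outDegree_add_one (hG : G.IsTree) {u v : V} (h : u ≠ v) :
    outDegree hfin u v + 1 = #(distSphere hfin v 1) := by
  obtain ⟨n, hn⟩ := Nat.exists_eq_add_one.2 (hG.connected.pos_dist_of_ne h)
  have hinward : #{w ∈ distSphere hfin v 1 | ¬G.dist u w = G.dist u v + 1} = 1 := by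
    refine Eq.trans (congrArg card (filter_congr fun w hw => ?_))
      (card_filter_dist_eq_one_of_isTree hG hn)
    have hstep := hG.dist_eq_dist_add_one_of_adj u (mem_distSphere_one.1 hw)
    omega
  rw [← card_filter_add_card_filter_not (s := distSphere hfin v 1) (G.dist u · = G.dist u v + 1),
    hinward, outDegree]

theorem card_distSphere_succ (hG : G.IsTree) (v : V) (n : ℕ) :
    #(distSphere hfin v (n + 1)) = ∑ u ∈ distSphere hfin v n, outDegree hfin v u := by
  calc #(distSphere hfin v (n + 1))
      = ∑ w ∈ distSphere hfin v (n + 1), #{u ∈ distSphere hfin w 1 | G.dist v u = n} := by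
        rw [card_eq_sum_ones]
        exact sum_congr rfl fun w hw =>
          (card_filter_dist_eq_one_of_isTree hG (mem_distSphere.1 hw)).symm
    _ = ∑ u ∈ distSphere hfin v n, #{w ∈ distSphere hfin u 1 | G.dist v w = n + 1} := by
        simp only [card_eq_sum_ones]
        refine sum_comm' fun w u => ?_
        simp only [mem_filter, mem_distSphere, G.dist_comm (u := w)]
        tauto
    _ = ∑ u ∈ distSphere hfin v n, outDegree hfin v u :=
        sum_congr rfl fun u hu => by rw [outDegree, mem_distSphere.1 hu]

theorem sum_distSphere_one_sum_distSphere (hG : G.IsTree) {M : Type*} [AddCommMonoid M]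
    (f : V → M) (v : V) (n : ℕ) :
    ∑ w ∈ distSphere hfin v 1, ∑ u ∈ distSphere hfin w (n + 1), f u =
      ∑ u ∈ distSphere hfin v n, outDegree hfin u v • f u +
        ∑ u ∈ distSphere hfin v (n + 2), f u := by
  classical
  have hdisj : Disjoint (distSphere hfin v n) (distSphere hfin v (n + 2)) :=
    disjoint_left.2 fun u hn hn2 => by
      rw [mem_distSphere] at hn hn2
      omega
  have hswap : ∑ w ∈ distSphere hfin v 1, ∑ u ∈ distSphere hfin w (n + 1), f u =
      ∑ u ∈ distSphere hfin v n ∪ distSphere hfin v (n + 2),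
        ∑ w ∈ distSphere hfin v 1 with G.dist u w = n + 1, f u := by
    refine sum_comm' fun w u => ?_
    simp only [mem_filter, mem_union, mem_distSphere, G.dist_comm (v := u)]
    refine ⟨fun ⟨hvw, hu⟩ => ⟨⟨hvw, hu⟩, ?_⟩, fun h => h.1⟩
    have hstep := hG.dist_eq_dist_add_one_of_adj u (SimpleGraph.dist_eq_one_iff_adj.1 hvw)
    omega
  rw [hswap, sum_union hdisj]
  congr 1 <;> refine sum_congr rfl fun u hu => ?_ <;>
    rw [mem_distSphere, G.dist_comm] at hu <;> rw [sum_const]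
  · rw [outDegree, hu]
  · rw [card_filter_dist_eq_one_of_isTree hG hu, one_smul]

end Tree

/-- The number `q_b` such that the vertices of parity `b` have `q_b + 1` neighbours. -/
def branching (qp qm : ℕ) (b : Bool) : ℕ := bif b then qp else qm

/-- The number of neighbours leading away from the root, for a vertex of parity `b` at distance `n`
from the root: all `q_b + 1` of them at the root itself, and `q_b` elsewhere. -/
def outBranching (qp qm : ℕ) (b : Bool) (n : ℕ) : ℕ :=
  branching qp qm b + if n = 0 then 1 else 0

theorem branching_pos {qp qm : ℕ} (hqp : 0 < qp) (hqm : 0 < qm) (b : Bool) :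
    0 < branching qp qm b := by
  cases b <;> assumption

namespace SemiHomTree

variable {qp qm : ℕ} {V : Type} (T : SemiHomTree qp qm V)

theorem isTree : T.G.IsTree := ⟨T.connected, T.acyclic⟩

/-- The sphere of radius `n` about `v`, as a `Finset`. -/
noncomputable abbrev sphere (v : V) (n : ℕ) : Finset V := distSphere T.sphere_finite v n

theorem Mop_eq_inv_card_mul_sum (n : ℕ) (f : V → ℂ) (v : V) :
    Mop T n f v = (#(T.sphere v n) : ℂ)⁻¹ * ∑ w ∈ T.sphere v n, f w := by
  rw [Mop, Set.ncard_eq_toFinset_card _ (T.sphere_finite v n),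
    finsum_mem_eq_finite_toFinset_sum _ (T.sphere_finite v n)]
  rfl

theorem card_sphere_one (v : V) : #(T.sphere v 1) = branching qp qm (T.eps v) + 1 := by
  have hcard : #(T.sphere v 1) = {w : V | T.G.Adj v w}.ncard := by
    simp only [← SimpleGraph.dist_eq_one_iff_adj]
    exact (Set.ncard_eq_toFinset_card _ (T.sphere_finite v 1)).symm
  cases hv : T.eps v
  · exact hcard.trans (T.degree_minus v hv)
  · exact hcard.trans (T.degree_plus v hv)

theorem outDegree_eq_outBranching {u v : V} {n : ℕ} (h : T.G.dist u v = n) :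
    outDegree T.sphere_finite u v = outBranching qp qm (T.eps v) n := by
  have hcard := T.card_sphere_one v
  obtain rfl | huv := eq_or_ne u v
  · rw [SimpleGraph.dist_self] at h
    rw [outDegree_self, hcard, outBranching, if_pos h.symm]
  · have hn : n ≠ 0 := h ▸ (T.connected.pos_dist_of_ne huv).ne'
    rw [← outDegree_add_one T.isTree huv] at hcard
    simpa [outBranching, hn] using hcard

theorem eps_eq_bodd_xor {v w : V} {n : ℕ} (h : T.G.dist v w = n) :
    T.eps w = (n.bodd ^^ T.eps v) := by
  obtain ⟨p, rfl⟩ := h ▸ T.connected.exists_walk_length_eq_dist v w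
  clear h
  induction p with
  | nil => simp
  | cons hadj p ih => rw [ih, T.adj_parity hadj]; simp

theorem card_sphere_succ (v : V) (n : ℕ) :
    #(T.sphere v (n + 1)) = outBranching qp qm (n.bodd ^^ T.eps v) n * #(T.sphere v n) := by
  rw [card_distSphere_succ T.isTree, mul_comm]
  refine sum_const_nat fun u hu => ?_
  have hdist := mem_distSphere.1 hu
  rw [T.outDegree_eq_outBranching hdist, T.eps_eq_bodd_xor hdist]

theorem card_sphere_add_two (v : V) (n : ℕ) :
    #(T.sphere v (n + 2)) =
      branching qp qm (!T.eps v) * (outBranching qp qm (T.eps v) n * #(T.sphere v n)) := by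
  rw [card_sphere_succ, card_sphere_succ]
  cases n with
  | zero => simp [outBranching]
  | succ n => cases hn : n.bodd <;> simp [outBranching, hn, mul_left_comm]

theorem card_sphere_eq_of_eps_eq {v w : V} (h : T.eps v = T.eps w) (n : ℕ) :
    #(T.sphere v n) = #(T.sphere w n) := by
  induction n with
  | zero => simp only [distSphere_zero T.connected, card_singleton]
  | succ n ih => rw [card_sphere_succ, card_sphere_succ, ih, h]

theorem outBranching_mul_card_sphere_pos (hqp : 0 < qp) (hqm : 0 < qm) (v : V) (n : ℕ) :
    0 < outBranching qp qm (T.eps v) n * #(T.sphere v n) := by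
  have hout (b : Bool) (k : ℕ) : 0 < outBranching qp qm b k :=
    Nat.add_pos_left (branching_pos hqp hqm b) _
  refine Nat.mul_pos (hout _ _) ?_
  induction n with
  | zero => simp [distSphere_zero T.connected]
  | succ n ih => rw [card_sphere_succ]; exact Nat.mul_pos (hout _ _) ih

theorem sum_sphere_one_sum_sphere {M : Type*} [AddCommMonoid M] (f : V → M) (v : V) (n : ℕ) :
    ∑ w ∈ T.sphere v 1, ∑ u ∈ T.sphere w (n + 1), f u =
      outBranching qp qm (T.eps v) n • ∑ u ∈ T.sphere v n, f u + ∑ u ∈ T.sphere v (n + 2), f u := by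
  rw [sum_distSphere_one_sum_distSphere T.isTree, smul_sum]
  congr 1
  refine sum_congr rfl fun u hu => ?_
  rw [T.outDegree_eq_outBranching (SimpleGraph.dist_comm.trans (mem_distSphere.1 hu))]

theorem card_sphere_one_mul_card_sphere_of_adj {v w : V} (h : T.G.Adj v w) (n : ℕ) :
    #(T.sphere v 1) * #(T.sphere w (n + 1)) =
      (branching qp qm (!T.eps v) + 1) * (outBranching qp qm (T.eps v) n * #(T.sphere v n)) := by
  have heq : ∀ w' ∈ T.sphere v 1, #(T.sphere w' (n + 1)) = #(T.sphere w (n + 1)) := fun w' hw' =>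
    T.card_sphere_eq_of_eps_eq
      ((T.adj_parity (mem_distSphere_one.1 hw')).trans (T.adj_parity h).symm) _
  calc #(T.sphere v 1) * #(T.sphere w (n + 1))
      = ∑ w' ∈ T.sphere v 1, ∑ _u ∈ T.sphere w' (n + 1), 1 := by
        simp only [← card_eq_sum_ones, sum_const_nat heq]
    _ = outBranching qp qm (T.eps v) n * #(T.sphere v n) + #(T.sphere v (n + 2)) := by
        rw [sum_sphere_one_sum_sphere]
        simp only [← card_eq_sum_ones, smul_eq_mul]
    _ = (branching qp qm (!T.eps v) + 1) *
          (outBranching qp qm (T.eps v) n * #(T.sphere v n)) := by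
        rw [card_sphere_add_two]
        ring

theorem Mop_one_Mop_succ (f : V → ℂ) (v : V) (n : ℕ) :
    Mop T 1 (Mop T (n + 1) f) v =
      ((branching qp qm (!T.eps v) + 1) *
          (outBranching qp qm (T.eps v) n * #(T.sphere v n)) : ℂ)⁻¹ *
        (outBranching qp qm (T.eps v) n * ∑ u ∈ T.sphere v n, f u +
          ∑ u ∈ T.sphere v (n + 2), f u) := by
  rw [← nsmul_eq_mul _ (∑ u ∈ T.sphere v n, f u), ← sum_sphere_one_sum_sphere, mul_sum,
    Mop_eq_inv_card_mul_sum, mul_sum]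
  refine sum_congr rfl fun w hw => ?_
  have hcard := T.card_sphere_one_mul_card_sphere_of_adj (mem_distSphere_one.1 hw) n
  rw [Mop_eq_inv_card_mul_sum, ← mul_assoc, ← mul_inv]
  exact_mod_cast congrArg (fun k : ℕ => (k : ℂ)⁻¹ * ∑ u ∈ T.sphere w (n + 1), f u) hcard

end SemiHomTree

theorem stmt_8_general {qp qm : ℕ} (hqp : 0 < qp) (hqm : 0 < qm) {V : Type}
    (T : SemiHomTree qp qm V) (f : V → ℂ) (v : V) (n : ℕ) :
    Mop T 1 (Mop T (n + 1) f) v =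
      ((branching qp qm (!T.eps v) : ℂ) + 1)⁻¹ * Mop T n f v +
        ((branching qp qm (!T.eps v) : ℂ) / ((branching qp qm (!T.eps v) : ℂ) + 1)) *
          Mop T (n + 2) f v := by
  have hb : (branching qp qm (!T.eps v) : ℂ) ≠ 0 :=
    Nat.cast_ne_zero.2 (branching_pos hqp hqm _).ne'
  have hb1 : (branching qp qm (!T.eps v) : ℂ) + 1 ≠ 0 := Nat.cast_add_one_ne_zero _
  obtain ⟨hc, hs⟩ : (outBranching qp qm (T.eps v) n : ℂ) ≠ 0 ∧ (#(T.sphere v n) : ℂ) ≠ 0 := by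
    exact_mod_cast mul_ne_zero_iff.1 (T.outBranching_mul_card_sphere_pos hqp hqm v n).ne'
  rw [T.Mop_one_Mop_succ, T.Mop_eq_inv_card_mul_sum n, T.Mop_eq_inv_card_mul_sum (n + 2),
    T.card_sphere_add_two]
  push_cast
  field_simp

theorem stmt_8 {qp qm : ℕ} (hqp : 2 ≤ qp) (hqm : 2 ≤ qm) {V : Type}
    (T : SemiHomTree qp qm V) (v0 : V) (hv0 : T.eps v0 = true)
    (f : V → ℂ) (v : V) (hv : T.eps v = true) (n : ℕ) (hn : 1 ≤ n) :
    Mop T 1 (fun u => Mop T n f u) v =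
      ((qm : ℂ) + 1)⁻¹ * Mop T (n - 1) f v +
        ((qm : ℂ) / ((qm : ℂ) + 1)) * Mop T (n + 1) f v := by
  obtain ⟨n, rfl⟩ := Nat.exists_eq_add_of_le' hn
  simpa [hv, branching] using stmt_8_general (by omega) (by omega) T f v n
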